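/- Among the 63 projective lines of the E7 root system there are exactly 135 unordered 7-tuples of mutually orthogonal lines. -/

import Mathlib

/-- The projective line (ray) spanned by a vector in `ℝ⁸`. -/
def ray8 (v : Fin 8 → ℝ) : Submodule ℝ (Fin 8 → ℝ) := Submodule.span ℝ {v}

/-- Orthogonality of subspaces of `ℝ⁸` with respect to the standard inner product. -/
def Perp8 (L M : Submodule ℝ (Fin 8 → ℝ)) : Prop :=
  ∀ x ∈ L, ∀ y ∈ M, ∑ i, x i * y i = 0

/-- The `E7` root system, modeled in the hyperplane `{Σ aᵢ = 0} ⊂ ℝ⁸` as the union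
of the `S₈`-orbits of `(1,−1,0,0,0,0,0,0)` and `(1/2)(1,1,1,1,−1,−1,−1,−1)`. -/
def E7roots : Set (Fin 8 → ℝ) :=
  {v | ∃ σ : Equiv.Perm (Fin 8),
    v = ![1, -1, 0, 0, 0, 0, 0, 0] ∘ σ ∨
    v = ((1 : ℝ) / 2) • (![1, 1, 1, 1, -1, -1, -1, -1] ∘ σ)}

/-- The 63 projective lines of the `E7` configuration. -/
def E7lines : Set (Submodule ℝ (Fin 8 → ℝ)) := ray8 '' E7roots

/-!
Reduce the roots modulo `2`: up to a multiple of `1/2` added to all coordinates a root has integer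
coordinates, and the set of its odd coordinates is determined up to complement by the line of the
root. This identifies the 63 lines with the nonzero words of the even-weight code in `𝔽₂⁷`, a
symplectic space of dimension 6 under the dot product. Distinct lines are spanned by roots with
inner product `-1`, `0` or `1`, which vanishes as soon as it is even, so orthogonality of lines
becomes orthogonality of codewords. Seven pairwise orthogonal nonzero words are then the nonzero
vectors of a Lagrangian subspace, and counting isotropic frames shows that a symplectic space of
dimension `2n` over `𝔽_q` has `(q + 1)(q² + 1) ⋯ (qⁿ + 1)` Lagrangian subspaces:
`3 * 5 * 9 = 135` here.
-/

open Module

theorem card_sigma_of_card_eq {α : Type*} {β : α → Type*} [Finite α] [∀ a, Finite (β a)] {c : ℕ}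
    (h : ∀ a, Nat.card (β a) = c) : Nat.card (Σ a, β a) = Nat.card α * c := by
  have := Fintype.ofFinite α
  simp [Nat.card_sigma, h]

theorem ncard_coe_submodule {K V : Type*} [DivisionRing K] [AddCommGroup V] [Module K V]
    [Fintype K] [Module.Finite K V] (W : Submodule K V) :
    (W : Set V).ncard = Fintype.card K ^ finrank K W := by
  rw [← Nat.card_coe_set_eq, ← Nat.card_eq_fintype_card]
  exact natCard_eq_pow_finrank (K := K) (V := W)

theorem ncard_pairwise_eq_of_bijOn {α β : Type*} {f : α → β} {s : Set α} {t : Set β}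
    {p : α → α → Prop} {q : β → β → Prop} (hf : Set.BijOn f s t)
    (hpq : s.Pairwise fun x y ↦ (q (f x) (f y) ↔ p x y)) (k : ℕ) :
    {T | T ⊆ t ∧ T.ncard = k ∧ T.Pairwise q}.ncard =
      {S | S ⊆ s ∧ S.ncard = k ∧ S.Pairwise p}.ncard := by
  have pairwise_image {S : Set α} (hS : S ⊆ s) : (f '' S).Pairwise q ↔ S.Pairwise p := by
    rw [(hf.injOn.mono hS).pairwise_image]
    exact ⟨fun h x hx y hy hxy ↦ (hpq (hS hx) (hS hy) hxy).1 (h hx hy hxy),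
      fun h x hx y hy hxy ↦ (hpq (hS hx) (hS hy) hxy).2 (h hx hy hxy)⟩
  have himage : {T | T ⊆ t ∧ T.ncard = k ∧ T.Pairwise q} =
      Set.image f '' {S | S ⊆ s ∧ S.ncard = k ∧ S.Pairwise p} := by
    ext T
    constructor
    · rintro ⟨hT, hk, hq⟩
      obtain ⟨S, hS, rfl⟩ := Set.subset_image_iff.1 (hf.image_eq.symm ▸ hT)
      rw [(hf.injOn.mono hS).ncard_image] at hk
      exact ⟨S, ⟨hS, hk, (pairwise_image hS).1 hq⟩, rfl⟩
    · rintro ⟨S, ⟨hS, hk, hp⟩, rfl⟩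
      exact ⟨(Set.image_mono hS).trans hf.image_eq.subset,
        by rw [(hf.injOn.mono hS).ncard_image, hk], (pairwise_image hS).2 hp⟩
  have hinj : Set.InjOn (Set.image f) {S | S ⊆ s ∧ S.ncard = k ∧ S.Pairwise p} :=
    hf.injOn.image.mono fun S hS ↦ hS.1
  rw [himage, hinj.ncard_image]

section Lagrangian

variable {K V : Type*} [Field K] [AddCommGroup V] [Module K V] {B : LinearMap.BilinForm K V}

theorem span_le_orthogonal_span_iff {s : Set V} :
    Submodule.span K s ≤ B.orthogonal (Submodule.span K s) ↔ ∀ x ∈ s, ∀ y ∈ s, B x y = 0 := by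
  refine ⟨fun h x hx y hy ↦ h (Submodule.subset_span hy) x (Submodule.subset_span hx),
    fun h y hy x hx ↦ ?_⟩
  induction hx, hy using Submodule.span_induction₂ with
  | mem_mem x y hx hy => exact h x hx y hy
  | zero_left => simp
  | zero_right => simp
  | add_left _ _ _ _ _ _ hx hy => simp [hx, hy]
  | add_right _ _ _ _ _ _ hx hy => simp [hx, hy]
  | smul_left _ _ _ _ _ h => simp [h]
  | smul_right _ _ _ _ _ h => simp [h]

/-- A subspace is Lagrangian for `B` if it is its own orthogonal complement. -/
def IsLagrangian (B : LinearMap.BilinForm K V) (L : Submodule K V) : Prop :=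
  B.orthogonal L = L

theorem two_mul_finrank_le_of_le_orthogonal [FiniteDimensional K V] (hB : B.Nondegenerate)
    {L : Submodule K V} (hL : L ≤ B.orthogonal L) : 2 * finrank K L ≤ finrank K V := by
  have h := Submodule.finrank_mono hL
  have := Submodule.finrank_le L
  rw [LinearMap.BilinForm.finrank_orthogonal hB] at h
  lia

theorem isLagrangian_iff [FiniteDimensional K V] (hB : B.Nondegenerate) {L : Submodule K V} :
    IsLagrangian B L ↔ L ≤ B.orthogonal L ∧ finrank K V = 2 * finrank K L := by
  have := Submodule.finrank_le L
  have hperp := LinearMap.BilinForm.finrank_orthogonal hB L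
  constructor
  · intro hL
    rw [hL] at hperp
    exact ⟨hL.ge, by lia⟩
  · rintro ⟨hL, hdim⟩
    exact (Submodule.eq_of_le_of_finrank_le hL (by lia)).symm

/-- An isotropic frame for `B` is a linearly independent family spanning a totally isotropic
subspace. -/
structure IsIsotropicFrame (B : LinearMap.BilinForm K V) {ι : Type*} (s : ι → V) : Prop where
  linearIndependent : LinearIndependent K s
  isotropic : ∀ i j, B (s i) (s j) = 0

namespace IsIsotropicFrame

theorem span_le_orthogonal {ι : Type*} {s : ι → V} (hs : IsIsotropicFrame B s) :
    Submodule.span K (Set.range s) ≤ B.orthogonal (Submodule.span K (Set.range s)) := by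
  rw [span_le_orthogonal_span_iff]
  rintro _ ⟨i, rfl⟩ _ ⟨j, rfl⟩
  exact hs.isotropic i j

theorem snoc_iff (hB : B.IsAlt) {k : ℕ} {s : Fin k → V} {v : V} :
    IsIsotropicFrame B (Fin.snoc s v : Fin (k + 1) → V) ↔
      IsIsotropicFrame B s ∧ v ∈ (B.orthogonal (Submodule.span K (Set.range s)) : Set V) \
        Submodule.span K (Set.range s) := by
  constructor
  · intro h
    obtain ⟨hs, hv⟩ := linearIndependent_finSnoc.1 h.linearIndependent
    refine ⟨⟨hs, fun i j ↦ by simpa using h.isotropic i.castSucc j.castSucc⟩, ?_, hv⟩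
    suffices Submodule.span K (Set.range s) ≤ LinearMap.ker (B.flip v) from fun x hx ↦ this hx
    rw [Submodule.span_le]
    rintro _ ⟨i, rfl⟩
    simpa using h.isotropic i.castSucc (Fin.last k)
  · rintro ⟨hs, hv, hv'⟩
    have hsv (i : Fin k) : B (s i) v = 0 := hv _ (Submodule.subset_span ⟨i, rfl⟩)
    refine ⟨linearIndependent_finSnoc.2 ⟨hs.linearIndependent, hv'⟩, fun i j ↦ ?_⟩
    induction i using Fin.lastCases <;> induction j using Fin.lastCases <;>
      simp [hs.isotropic, hB.self_eq_zero, hsv, hB.eq_iff.1 (hsv _)]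

/-- An isotropic frame of `k + 1` vectors consists of its first `k` vectors and of a vector
orthogonal to, but not in, their span. -/
def snocEquiv (hB : B.IsAlt) (k : ℕ) :
    {s : Fin (k + 1) → V // IsIsotropicFrame B s} ≃
      Σ s : {s : Fin k → V // IsIsotropicFrame B s},
        ↥((B.orthogonal (Submodule.span K (Set.range s.1)) : Set V) \
          Submodule.span K (Set.range s.1)) where
  toFun s :=
    have h := (snoc_iff hB).1 ((Fin.snoc_init_self s.1).symm ▸ s.2)
    ⟨⟨Fin.init s.1, h.1⟩, s.1 (Fin.last k), h.2⟩
  invFun p := ⟨Fin.snoc p.1.1 p.2.1, (snoc_iff hB).2 ⟨p.1.2, p.2.2⟩⟩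
  left_inv s := Subtype.ext (Fin.snoc_init_self s.1)
  right_inv p := Sigma.subtype_ext (Subtype.ext (by simp)) (by simp)

section FiniteDimensional

variable [FiniteDimensional K V]

theorem isLagrangian_span (hB : B.Nondegenerate) {n : ℕ} (hn : finrank K V = 2 * n)
    {s : Fin n → V} (hs : IsIsotropicFrame B s) :
    IsLagrangian B (Submodule.span K (Set.range s)) :=
  (isLagrangian_iff hB).2 ⟨hs.span_le_orthogonal, by
    rw [hn, finrank_span_eq_card hs.linearIndependent, Fintype.card_fin]⟩

theorem and_span_eq_iff (hB : B.Nondegenerate) {n : ℕ} (hn : finrank K V = 2 * n)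
    {L : Submodule K V} (hL : IsLagrangian B L) {s : Fin n → V} :
    IsIsotropicFrame B s ∧ Submodule.span K (Set.range s) = L ↔
      LinearIndependent K s ∧ ∀ i, s i ∈ L := by
  obtain ⟨hiso, hdim⟩ := (isLagrangian_iff hB).1 hL
  constructor
  · rintro ⟨hs, rfl⟩
    exact ⟨hs.linearIndependent, fun i ↦ Submodule.subset_span ⟨i, rfl⟩⟩
  · rintro ⟨hs, hsL⟩
    refine ⟨⟨hs, fun i j ↦ hiso (hsL j) _ (hsL i)⟩, Submodule.eq_of_le_of_finrank_le ?_ ?_⟩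
    · rw [Submodule.span_le]
      rintro _ ⟨i, rfl⟩
      exact hsL i
    · rw [finrank_span_eq_card hs, Fintype.card_fin]
      lia

/-- The isotropic frames spanning a Lagrangian subspace are its ordered bases. -/
def fiberEquiv (hB : B.Nondegenerate) {n : ℕ} (hn : finrank K V = 2 * n)
    {L : Submodule K V} (hL : IsLagrangian B L) :
    {s : {s : Fin n → V // IsIsotropicFrame B s} // Submodule.span K (Set.range s.1) = L} ≃
      {t : Fin n → L // LinearIndependent K t} where
  toFun s :=
    have h := (and_span_eq_iff hB hn hL).1 ⟨s.1.2, s.2⟩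
    ⟨fun i ↦ ⟨s.1.1 i, h.2 i⟩, .of_comp L.subtype h.1⟩
  invFun t :=
    have h := (and_span_eq_iff hB hn hL).2
      ⟨t.2.map' L.subtype L.ker_subtype, fun i ↦ (t.1 i).2⟩
    ⟨⟨fun i ↦ t.1 i, h.1⟩, h.2⟩
  left_inv _ := rfl
  right_inv _ := rfl

end FiniteDimensional

variable [Fintype K] [Finite V]

theorem ncard_orthogonal_sdiff_span (hB : B.Nondegenerate) {k : ℕ} {s : Fin k → V}
    (hs : IsIsotropicFrame B s) :
    ((B.orthogonal (Submodule.span K (Set.range s)) : Set V) \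
        Submodule.span K (Set.range s)).ncard =
      Fintype.card K ^ (finrank K V - k) - Fintype.card K ^ k := by
  rw [Set.ncard_sdiff hs.span_le_orthogonal, ncard_coe_submodule, ncard_coe_submodule,
    LinearMap.BilinForm.finrank_orthogonal hB, finrank_span_eq_card hs.linearIndependent,
    Fintype.card_fin]

theorem card_eq_prod (hB : B.Nondegenerate) (hB' : B.IsAlt) (k : ℕ) :
    Nat.card {s : Fin k → V // IsIsotropicFrame B s} =
      ∏ i ∈ Finset.range k,
        (Fintype.card K ^ (finrank K V - i) - Fintype.card K ^ i) := by
  induction k with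
  | zero =>
    have : Unique {s : Fin 0 → V // IsIsotropicFrame B s} :=
      { default := ⟨Fin.elim0, linearIndependent_empty_type, fun i ↦ i.elim0⟩
        uniq := fun _ ↦ Subsingleton.elim _ _ }
    simp
  | succ k ih =>
    rw [Nat.card_congr (snocEquiv hB' k),
      card_sigma_of_card_eq fun s ↦ ncard_orthogonal_sdiff_span hB s.2, ih,
      Finset.prod_range_succ]

theorem card_eq_card_lagrangian_mul (hB : B.Nondegenerate) {n : ℕ} (hn : finrank K V = 2 * n) :
    Nat.card {s : Fin n → V // IsIsotropicFrame B s} =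
      Nat.card {L : Submodule K V // IsLagrangian B L} *
        ∏ i ∈ Finset.range n, (Fintype.card K ^ n - Fintype.card K ^ i) := by
  let span (s : {s : Fin n → V // IsIsotropicFrame B s}) :
      {L : Submodule K V // IsLagrangian B L} := ⟨_, s.2.isLagrangian_span hB hn⟩
  have card_fiber (L : {L : Submodule K V // IsLagrangian B L}) :
      Nat.card {s // span s = L} =
        ∏ i ∈ Finset.range n, (Fintype.card K ^ n - Fintype.card K ^ i) := by
    have hdim : finrank K L.1 = n := by
      have := ((isLagrangian_iff hB).1 L.2).2
      lia
    simp only [span, Subtype.ext_iff (a2 := L)]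
    rw [Nat.card_congr (fiberEquiv hB hn L.2), card_linearIndependent hdim.ge, hdim,
      Finset.prod_range]
  rw [← Nat.card_congr (Equiv.sigmaFiberEquiv span), card_sigma_of_card_eq card_fiber]

end IsIsotropicFrame

theorem card_isLagrangian [Fintype K] [Finite V] (hB : B.Nondegenerate) (hB' : B.IsAlt) {n : ℕ}
    (hn : finrank K V = 2 * n) :
    Nat.card {L : Submodule K V // IsLagrangian B L} =
      ∏ i ∈ Finset.range n, (Fintype.card K ^ (i + 1) + 1) := by
  set q := Fintype.card K
  have hq : 1 < q := Fintype.one_lt_card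
  have bases_pos : 0 < ∏ i ∈ Finset.range n, (q ^ n - q ^ i) :=
    Finset.prod_pos fun i hi ↦
      Nat.sub_pos_of_lt (Nat.pow_lt_pow_right hq (Finset.mem_range.1 hi))
  refine Nat.eq_of_mul_eq_mul_right bases_pos ?_
  calc
    _ = ∏ i ∈ Finset.range n, (q ^ (2 * n - i) - q ^ i) := by
      rw [← IsIsotropicFrame.card_eq_card_lagrangian_mul hB hn,
        IsIsotropicFrame.card_eq_prod hB hB', hn]
    _ = ∏ i ∈ Finset.range n, (q ^ (n - i) + 1) * (q ^ n - q ^ i) := by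
      refine Finset.prod_congr rfl fun i hi ↦ ?_
      have hin : i < n := Finset.mem_range.1 hi
      rw [Nat.mul_sub, add_mul, add_mul, ← pow_add, ← pow_add, Nat.sub_add_cancel hin.le,
        show n - i + n = 2 * n - i by lia]
      lia
    _ = _ := by
      rw [Finset.prod_mul_distrib, ← Finset.prod_range_reflect (fun i ↦ q ^ (i + 1) + 1)]
      congr 1
      refine Finset.prod_congr rfl fun i hi ↦ ?_
      rw [show n - 1 - i + 1 = n - i by have := Finset.mem_range.1 hi; lia]

end Lagrangian

section ZModTwo

variable {V : Type*} [AddCommGroup V] [Module (ZMod 2) V] [Finite V]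
  {B : LinearMap.BilinForm (ZMod 2) V} {n : ℕ}

theorem ncard_sdiff_zero_of_isLagrangian (hB : B.Nondegenerate)
    (hn : finrank (ZMod 2) V = 2 * n) {L : Submodule (ZMod 2) V} (hL : IsLagrangian B L) :
    ((L : Set V) \ {0}).ncard = 2 ^ n - 1 := by
  have hdim : finrank (ZMod 2) L = n := by
    have := ((isLagrangian_iff hB).1 hL).2
    lia
  rw [Set.ncard_sdiff_singleton_of_mem L.zero_mem, ncard_coe_submodule, ZMod.card, hdim]

theorem exists_isLagrangian_sdiff_zero_eq (hB : B.Nondegenerate) (hB' : B.IsAlt)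
    (hn : finrank (ZMod 2) V = 2 * n) {S : Set V} (hS₀ : S ⊆ {0}ᶜ) (hS : S.ncard = 2 ^ n - 1)
    (hperp : S.Pairwise fun x y ↦ B x y = 0) :
    ∃ L, IsLagrangian B L ∧ (L : Set V) \ {0} = S := by
  set L := Submodule.span (ZMod 2) S
  have hiso : L ≤ B.orthogonal L := span_le_orthogonal_span_iff.2 fun x hx y hy ↦ by
    obtain rfl | hxy := eq_or_ne x y
    · exact hB' x
    · exact hperp hx hy hxy
  have h0 : (0 : V) ∉ S := fun h ↦ hS₀ h rfl
  have hsub : insert 0 S ⊆ (L : Set V) := Set.insert_subset L.zero_mem Submodule.subset_span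
  have hinsert : (insert 0 S).ncard = 2 ^ n := by
    rw [Set.ncard_insert_of_notMem h0, hS, Nat.sub_add_cancel Nat.one_le_two_pow]
  have hcard : (L : Set V).ncard = 2 ^ finrank (ZMod 2) L := by
    rw [ncard_coe_submodule, ZMod.card]
  have hdim : finrank (ZMod 2) L = n := by
    have hle := two_mul_finrank_le_of_le_orthogonal hB hiso
    refine le_antisymm (by lia) ((Nat.pow_le_pow_iff_right one_lt_two).1 ?_)
    rw [← hinsert, ← hcard]
    exact Set.ncard_le_ncard hsub
  have hcoe : insert 0 S = (L : Set V) :=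
    Set.eq_of_subset_of_ncard_le hsub (by rw [hinsert, hcard, hdim])
  exact ⟨L, (isLagrangian_iff hB).2 ⟨hiso, by rw [hn, hdim]⟩, by
    rw [← hcoe, Set.insert_sdiff_self_of_notMem h0]⟩

theorem ncard_pairwise_orthogonal (hB : B.Nondegenerate) (hB' : B.IsAlt)
    (hn : finrank (ZMod 2) V = 2 * n) :
    {S : Set V | S ⊆ {0}ᶜ ∧ S.ncard = 2 ^ n - 1 ∧ S.Pairwise fun x y ↦ B x y = 0}.ncard =
      ∏ i ∈ Finset.range n, (2 ^ (i + 1) + 1) := by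
  have himage : {S : Set V | S ⊆ {0}ᶜ ∧ S.ncard = 2 ^ n - 1 ∧ S.Pairwise fun x y ↦ B x y = 0} =
      (fun L : Submodule (ZMod 2) V ↦ (L : Set V) \ {0}) '' {L | IsLagrangian B L} := by
    ext S
    constructor
    · rintro ⟨hS₀, hS, hperp⟩
      exact exists_isLagrangian_sdiff_zero_eq hB hB' hn hS₀ hS hperp
    · rintro ⟨L, hL, rfl⟩
      exact ⟨fun x hx ↦ hx.2, ncard_sdiff_zero_of_isLagrangian hB hn hL,
        fun x hx y hy _ ↦ hL.ge hy.1 x hx.1⟩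
  have hinj : Function.Injective fun L : Submodule (ZMod 2) V ↦ (L : Set V) \ {0} := by
    intro L M (h : (L : Set V) \ {0} = (M : Set V) \ {0})
    refine SetLike.coe_injective ?_
    rw [← Set.insert_eq_of_mem (s := (L : Set V)) L.zero_mem, ← Set.insert_sdiff_singleton, h,
      Set.insert_sdiff_singleton, Set.insert_eq_of_mem (s := (M : Set V)) M.zero_mem]
  rw [himage, Set.ncard_image_of_injective _ hinj, ← Nat.card_coe_set_eq]
  exact (card_isLagrangian hB hB' hn).trans (by rw [ZMod.card])

end ZModTwo

section EvenWeight

theorem zmod_two_mul_self (a : ZMod 2) : a * a = a := by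
  decide +revert

variable (ι : Type*) [Fintype ι]

/-- The dot product on `𝔽₂^ι`. -/
abbrev dotForm : LinearMap.BilinForm (ZMod 2) (ι → ZMod 2) :=
  dotProductBilin (ZMod 2) (ZMod 2)

/-- The even-weight code in `𝔽₂^ι`, as the orthogonal complement of the all-ones vector. -/
def evenWeight : Submodule (ZMod 2) (ι → ZMod 2) :=
  (dotForm ι).orthogonal (Submodule.span (ZMod 2) {1})

/-- The restriction of the dot product to the even-weight code. -/
abbrev evenWeightForm : LinearMap.BilinForm (ZMod 2) (evenWeight ι) :=
  (dotForm ι).restrict (evenWeight ι)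

variable {ι}

theorem mem_evenWeight {x : ι → ZMod 2} : x ∈ evenWeight ι ↔ ∑ i, x i = 0 := by
  rw [← one_dotProduct]
  refine ⟨fun h ↦ h 1 (Submodule.mem_span_singleton_self 1), fun h y hy ↦ ?_⟩
  obtain ⟨c, rfl⟩ := Submodule.mem_span_singleton.1 hy
  simpa using Or.inr h

theorem evenWeightForm_isAlt : (evenWeightForm ι).IsAlt := by
  intro x
  simpa [dotProduct, zmod_two_mul_self] using mem_evenWeight.1 x.2

theorem dotForm_nondegenerate : (dotForm ι).Nondegenerate := by
  exact ⟨fun x hx ↦ dotProduct_eq_zero _ hx, fun x hx ↦ dotProduct_eq_zero _ fun y ↦ by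
    rw [dotProduct_comm]; exact hx y⟩

theorem evenWeightForm_nondegenerate (hι : Odd (Fintype.card ι)) :
    (evenWeightForm ι).Nondegenerate := by
  refine LinearMap.BilinForm.restrict_nondegenerate_orthogonal_spanSingleton (dotForm ι)
    dotForm_nondegenerate (fun x y h ↦ (dotProduct_comm y x).trans h) (x := 1) ?_
  simpa [dotProduct, ZMod.natCast_eq_zero_iff_even] using hι

theorem finrank_evenWeight [Nonempty ι] :
    finrank (ZMod 2) (evenWeight ι) = Fintype.card ι - 1 := by
  rw [evenWeight, LinearMap.BilinForm.finrank_orthogonal dotForm_nondegenerate,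
    finrank_span_singleton one_ne_zero, finrank_fintype_fun_eq_card]

end EvenWeight

section Codeword

variable {n : ℕ} {A B : Finset (Fin (n + 1))}

/-- The codeword of a set `A` of coordinates in `{0, …, n}`: its indicator function, replaced by
that of `Aᶜ` when `n ∈ A`, restricted to `{0, …, n - 1}`. Even sets modulo complementation are
thereby identified with the even-weight code. -/
def codeword (A : Finset (Fin (n + 1))) (i : Fin n) : ZMod 2 :=
  (if i.castSucc ∈ A then 1 else 0) + if Fin.last n ∈ A then 1 else 0

theorem codeword_dotProduct (hn : Odd n) (hA : Even A.card) (hB : Even B.card) :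
    codeword A ⬝ᵥ codeword B = (A ∩ B).card := by
  let χ (S : Finset (Fin (n + 1))) (k : Fin (n + 1)) : ZMod 2 := if k ∈ S then 1 else 0
  have sum_χ (S : Finset (Fin (n + 1))) : ∑ k, χ S k = S.card := by simp [χ]
  have sum_χ_mul : ∑ k, χ A k * χ B k = (A ∩ B).card := by
    simp [χ, Finset.inter_comm A B]
  have card_eq_zero : ((n : ZMod 2) + 1) = 0 := by
    exact_mod_cast (ZMod.natCast_eq_zero_iff_even).2 hn.add_one
  calc
    _ = ∑ k, (χ A k + χ A (Fin.last n)) * (χ B k + χ B (Fin.last n)) := by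
      simp [Fin.sum_univ_castSucc, CharTwo.add_self_eq_zero, dotProduct, codeword, χ]
    _ = ∑ k, χ A k * χ B k + (∑ k, χ A k) * χ B (Fin.last n) +
        χ A (Fin.last n) * ∑ k, χ B k + (n + 1) * (χ A (Fin.last n) * χ B (Fin.last n)) := by
      simp only [mul_add, add_mul, Finset.sum_add_distrib, Finset.sum_mul, Finset.mul_sum,
        Finset.sum_const, Finset.card_univ, Fintype.card_fin, nsmul_eq_mul, Nat.cast_add,
        Nat.cast_one]
      ring
    _ = _ := by
      rw [sum_χ, sum_χ, sum_χ_mul, card_eq_zero, ZMod.natCast_eq_zero_iff_even.2 hA,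
        ZMod.natCast_eq_zero_iff_even.2 hB]
      ring

theorem codeword_mem_evenWeight (hn : Odd n) (hA : Even A.card) :
    codeword A ∈ evenWeight (Fin n) := by
  rw [mem_evenWeight]
  have h := codeword_dotProduct hn hA hA
  rw [Finset.inter_self, ZMod.natCast_eq_zero_iff_even.2 hA] at h
  simpa only [dotProduct, zmod_two_mul_self] using h

theorem codeword_eq_iff : codeword A = codeword B ↔ A = B ∨ A = Bᶜ := by
  constructor
  · intro h
    have mem_iff (k : Fin (n + 1)) :
        ((k ∈ A ↔ k ∈ B) ↔ (Fin.last n ∈ A ↔ Fin.last n ∈ B)) := by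
      induction k using Fin.lastCases with
      | last => exact Iff.rfl
      | cast i =>
        have hi := congrFun h i
        simp only [codeword] at hi
        split_ifs at hi <;> simp_all [CharTwo.add_self_eq_zero]
    by_cases hlast : Fin.last n ∈ A ↔ Fin.last n ∈ B
    · exact .inl (Finset.ext fun k ↦ (mem_iff k).2 hlast)
    · refine .inr (Finset.ext fun k ↦ ?_)
      have := mt (mem_iff k).1 hlast
      rw [Finset.mem_compl]
      tauto
  · rintro (rfl | rfl)
    · rfl
    · funext i
      simp only [codeword, Finset.mem_compl]
      split_ifs <;> simp_all [CharTwo.add_self_eq_zero]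

theorem codeword_eq_zero_iff : codeword A = 0 ↔ A = ∅ ∨ A = Finset.univ := by
  have codeword_empty : codeword (∅ : Finset (Fin (n + 1))) = 0 := by
    funext i
    simp [codeword]
  rw [← codeword_empty, codeword_eq_iff, Finset.compl_empty]

theorem exists_even_codeword_eq (x : evenWeight (Fin n)) :
    ∃ A : Finset (Fin (n + 1)), Even A.card ∧ codeword A = x := by
  have ite_ne_zero (a : ZMod 2) : (if a ≠ 0 then 1 else 0) = a := by decide +revert
  refine ⟨(Finset.univ.filter fun i ↦ x.1 i ≠ 0).map Fin.castSuccEmb, ?_, ?_⟩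
  · rw [Finset.card_map, ← ZMod.natCast_eq_zero_iff_even, ← Finset.sum_boole]
    simpa only [ite_ne_zero] using mem_evenWeight.1 x.2
  · funext i
    simpa [codeword, Fin.castSucc_ne_last] using ite_ne_zero (x.1 i)

end Codeword

section Roots

theorem exists_comp_perm_eq_pair_iff {r : Fin 8 → ℝ} :
    (∃ σ : Equiv.Perm (Fin 8), r = ![1, -1, 0, 0, 0, 0, 0, 0] ∘ σ) ↔
      ∃ i j, i ≠ j ∧ r = Pi.single i 1 - Pi.single j 1 := by
  have comp_perm (σ : Equiv.Perm (Fin 8)) : (![1, -1, 0, 0, 0, 0, 0, 0] : Fin 8 → ℝ) ∘ σ =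
      Pi.single (σ.symm 0) 1 - Pi.single (σ.symm 1) 1 := by
    have : (![1, -1, 0, 0, 0, 0, 0, 0] : Fin 8 → ℝ) = Pi.single 0 1 - Pi.single 1 1 := by
      funext k
      fin_cases k <;> simp
    funext k
    simp [this, Pi.single_apply, Equiv.eq_symm_apply]
  constructor
  · rintro ⟨σ, rfl⟩
    exact ⟨_, _, σ.symm.injective.ne zero_ne_one, comp_perm σ⟩
  · rintro ⟨i, j, hij, rfl⟩
    obtain ⟨σ, hσ⟩ := Equiv.Perm.exists_extending_pair ![(0 : Fin 8), 1] ![i, j]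
      (by simp [Function.Injective, Fin.forall_fin_two])
      (by simp [Function.Injective, Fin.forall_fin_two, hij, hij.symm])
    have hi : σ 0 = i := hσ 0
    have hj : σ 1 = j := hσ 1
    exact ⟨σ.symm, by rw [comp_perm, Equiv.symm_symm, hi, hj]⟩

theorem exists_comp_perm_eq_half_iff {r : Fin 8 → ℝ} :
    (∃ σ : Equiv.Perm (Fin 8), r = (1 / 2 : ℝ) • ![1, 1, 1, 1, -1, -1, -1, -1] ∘ σ) ↔
      ∃ A : Finset (Fin 8), A.card = 4 ∧ r = fun k ↦ (if k ∈ A then 1 else 0) - 1 / 2 := by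
  let A₀ : Finset (Fin 8) := {0, 1, 2, 3}
  have comp_perm (σ : Equiv.Perm (Fin 8)) :
      (1 / 2 : ℝ) • (![1, 1, 1, 1, -1, -1, -1, -1] : Fin 8 → ℝ) ∘ σ =
        fun k ↦ (if k ∈ A₀.map σ.symm.toEmbedding then 1 else 0) - 1 / 2 := by
    have (k : Fin 8) : 1 / 2 * (![1, 1, 1, 1, -1, -1, -1, -1] : Fin 8 → ℝ) k =
        (if k ∈ A₀ then 1 else 0) - 1 / 2 := by
      fin_cases k <;> norm_num [A₀, Fin.ext_iff]
    funext k
    simp only [Pi.smul_apply, Function.comp_apply, smul_eq_mul, this, Finset.mem_map_equiv,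
      Equiv.symm_symm]
  constructor
  · rintro ⟨σ, rfl⟩
    exact ⟨_, Finset.card_map _, comp_perm σ⟩
  · rintro ⟨A, hA, rfl⟩
    obtain ⟨σ, rfl⟩ := Equiv.Perm.exists_map_finset_eq A₀ A hA.symm
    exact ⟨σ.symm, by rw [comp_perm, Equiv.symm_symm]⟩

/-- `E7RootClass r A` says that `r` is a root of `E7` and `A` its class modulo `2`: up to adding
a multiple of `1/2` to all coordinates, `r` has integer coordinates, odd exactly on `A`. -/
inductive E7RootClass : (Fin 8 → ℝ) → Finset (Fin 8) → Prop
  | pair {i j : Fin 8} (hij : i ≠ j) : E7RootClass (Pi.single i 1 - Pi.single j 1) {i, j}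
  | half {A : Finset (Fin 8)} (hA : A.card = 4) :
      E7RootClass (fun k ↦ (if k ∈ A then 1 else 0) - 1 / 2) A

theorem mem_E7roots_iff {r : Fin 8 → ℝ} : r ∈ E7roots ↔ ∃ A, E7RootClass r A := by
  rw [E7roots, Set.mem_ofPred_eq, exists_or, exists_comp_perm_eq_pair_iff,
    exists_comp_perm_eq_half_iff]
  constructor
  · rintro (⟨i, j, hij, rfl⟩ | ⟨A, hA, rfl⟩)
    · exact ⟨_, .pair hij⟩
    · exact ⟨_, .half hA⟩
  · rintro ⟨A, hij | hA⟩
    · exact .inl ⟨_, _, hij, rfl⟩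
    · exact .inr ⟨A, hA, rfl⟩

namespace E7RootClass

variable {r s : Fin 8 → ℝ} {A B : Finset (Fin 8)}

theorem card_eq (h : E7RootClass r A) : A.card = 2 ∨ A.card = 4 := by
  cases h with
  | pair hij => exact .inl (Finset.card_pair hij)
  | half hA => exact .inr hA

theorem even_card (h : E7RootClass r A) : Even A.card := by
  rcases h.card_eq with h | h <;> rw [h] <;> decide

theorem sum_eq_zero (h : E7RootClass r A) : ∑ k, r k = 0 := by
  cases h with
  | pair hij => simp
  | half hA => norm_num [hA]

theorem dotProduct_self (h : E7RootClass r A) : r ⬝ᵥ r = 2 := by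
  cases h with
  | pair hij => norm_num [hij, hij.symm]
  | half hA =>
    have (k : Fin 8) : ((if k ∈ A then 1 else 0) - 1 / 2 : ℝ) *
        ((if k ∈ A then 1 else 0) - 1 / 2) = 1 / 4 := by
      split_ifs <;> norm_num
    simp only [dotProduct, this]
    norm_num

theorem exists_eq_intCast_add_half (h : E7RootClass r A) : ∃ (a : Fin 8 → ℤ) (m : ℤ),
    (∀ k, r k = a k + m / 2) ∧ ∀ k, (a k : ZMod 2) = if k ∈ A then 1 else 0 := by
  cases h with
  | @pair i j hij =>
    refine ⟨Pi.single i 1 - Pi.single j 1, 0, fun k ↦ ?_, fun k ↦ ?_⟩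
    · simp [Pi.single_apply]
    · by_cases hi : k = i <;> by_cases hj : k = j <;> simp_all
  | half hA =>
    refine ⟨fun k ↦ if k ∈ A then 1 else 0, -1, fun k ↦ ?_, fun k ↦ ?_⟩
    · push_cast
      ring
    · push_cast
      rfl

theorem exists_dotProduct_eq_intCast (hr : E7RootClass r A) (hs : E7RootClass s B) :
    ∃ z : ℤ, r ⬝ᵥ s = z ∧ (z : ZMod 2) = (A ∩ B).card := by
  obtain ⟨a, m, hra, ha⟩ := hr.exists_eq_intCast_add_half
  obtain ⟨b, l, hsb, hb⟩ := hs.exists_eq_intCast_add_half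
  have sum_a : ∑ k, (a k : ℝ) = -4 * m := by
    have := hr.sum_eq_zero
    simp only [hra, Finset.sum_add_distrib, Finset.sum_const, Finset.card_univ, Fintype.card_fin,
      nsmul_eq_mul, Nat.cast_ofNat] at this
    linarith
  refine ⟨∑ k, a k * b k - 2 * (m * l), ?_, ?_⟩
  · calc
      r ⬝ᵥ s = ∑ k, (a k * b k + l / 2 * a k + m / 2 * s k : ℝ) :=
        Finset.sum_congr rfl fun k _ ↦ by rw [hra, hsb]; ring
      _ = ∑ k, (a k * b k : ℝ) + l / 2 * (-4 * m) + m / 2 * 0 := by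
        rw [Finset.sum_add_distrib, Finset.sum_add_distrib, ← Finset.mul_sum, ← Finset.mul_sum,
          sum_a, hs.sum_eq_zero]
      _ = _ := by
        push_cast
        ring
  · have two_eq_zero : (2 : ZMod 2) = 0 := rfl
    simp [ha, hb, two_eq_zero, Finset.inter_comm A B]

theorem codeword_eq_intCast (h : E7RootClass r A) {i : Fin 7} {z : ℤ}
    (hz : r i.castSucc - r (Fin.last 7) = z) : codeword A i = z := by
  obtain ⟨a, m, hra, ha⟩ := h.exists_eq_intCast_add_half
  have hz : a i.castSucc - a (Fin.last 7) = z := by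
    rw [hra, hra, add_sub_add_right_eq_sub] at hz
    exact_mod_cast hz
  rw [codeword, ← ha, ← ha, ← hz, Int.cast_sub, CharTwo.sub_eq_add]

theorem eq_or_eq_neg_of_eq (hr : E7RootClass r A) (hs : E7RootClass s B) (hAB : A = B) :
    r = s ∨ r = -s := by
  have hcard := congrArg Finset.card hAB
  cases hr with
  | pair hij =>
    cases hs with
    | pair hkl =>
      rw [← Finset.coe_inj, Finset.coe_pair, Finset.coe_pair, Set.pair_eq_pair_iff] at hAB
      obtain ⟨rfl, rfl⟩ | ⟨rfl, rfl⟩ := hAB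
      · exact .inl rfl
      · exact .inr (neg_sub _ _).symm
    | half hB =>
      rw [Finset.card_pair hij, hB] at hcard
      lia
  | half hA =>
    cases hs with
    | pair hkl =>
      rw [Finset.card_pair hkl, hA] at hcard
      lia
    | half hB => exact .inl (by rw [hAB])

theorem eq_neg_of_eq_compl (hr : E7RootClass r A) (hs : E7RootClass s B) (hAB : A = Bᶜ) :
    r = -s := by
  have hcard : A.card + B.card = 8 := by
    rw [hAB, Finset.card_compl_add_card, Fintype.card_fin]
  have := hr.card_eq
  have := hs.card_eq
  cases hr with
  | pair hij =>
    rw [Finset.card_pair hij] at hcard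
    lia
  | half hA =>
    cases hs with
    | pair hkl =>
      rw [Finset.card_pair hkl] at hcard
      lia
    | half hB =>
      subst hAB
      funext k
      by_cases hk : k ∈ B <;> norm_num [hk]

theorem eq_or_eq_neg_iff (hr : E7RootClass r A) (hs : E7RootClass s B) :
    r = s ∨ r = -s ↔ codeword A = codeword B := by
  constructor
  · intro h
    funext i
    obtain ⟨z, hz⟩ : ∃ z : ℤ, s i.castSucc - s (Fin.last 7) = z := by
      obtain ⟨a, m, hsa, -⟩ := hs.exists_eq_intCast_add_half
      exact ⟨a i.castSucc - a (Fin.last 7), by simp [hsa]⟩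
    rw [hs.codeword_eq_intCast hz]
    rcases h with rfl | rfl
    · exact hr.codeword_eq_intCast hz
    · rw [hr.codeword_eq_intCast (z := -z) (by simp [← hz]; ring), Int.cast_neg, CharTwo.neg_eq]
  · rw [codeword_eq_iff]
    rintro (hAB | hAB)
    · exact hr.eq_or_eq_neg_of_eq hs hAB
    · exact .inr (hr.eq_neg_of_eq_compl hs hAB)

theorem codeword_ne_zero (h : E7RootClass r A) : codeword A ≠ 0 := by
  rw [Ne, codeword_eq_zero_iff]
  rintro (rfl | rfl) <;> simpa using h.card_eq

theorem abs_dotProduct_lt_two (hr : E7RootClass r A) (hs : E7RootClass s B)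
    (h : codeword A ≠ codeword B) : |r ⬝ᵥ s| < 2 := by
  have hne := mt (hr.eq_or_eq_neg_iff hs).1 h
  rw [not_or] at hne
  have dotProduct_self_pos {v : Fin 8 → ℝ} (hv : v ≠ 0) : 0 < v ⬝ᵥ v :=
    (Finset.sum_nonneg fun k _ ↦ mul_self_nonneg (v k)).lt_of_ne' (mt dotProduct_self_eq_zero.1 hv)
  have hsub := dotProduct_self_pos (sub_ne_zero.2 hne.1)
  have hadd := dotProduct_self_pos (mt eq_neg_of_add_eq_zero_left hne.2)
  simp only [sub_dotProduct, dotProduct_sub, add_dotProduct, dotProduct_add, hr.dotProduct_self,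
    hs.dotProduct_self, dotProduct_comm s r] at hsub hadd
  rw [abs_lt]
  constructor <;> linarith

theorem dotProduct_eq_zero_iff (hr : E7RootClass r A) (hs : E7RootClass s B)
    (h : codeword A ≠ codeword B) : r ⬝ᵥ s = 0 ↔ codeword A ⬝ᵥ codeword B = 0 := by
  obtain ⟨z, hrs, hz⟩ := hr.exists_dotProduct_eq_intCast hs
  have habs := hr.abs_dotProduct_lt_two hs h
  rw [codeword_dotProduct (by decide) hr.even_card hs.even_card, ← hz,
    ZMod.intCast_zmod_eq_zero_iff_dvd]
  rw [hrs] at habs ⊢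
  have habs : |z| < 2 := by exact_mod_cast habs
  rw [Int.cast_eq_zero]
  exact ⟨fun h ↦ h ▸ dvd_zero _, fun h ↦ Int.eq_zero_of_abs_lt_dvd h habs⟩

theorem exists_of_card_eq (h : A.card = 2 ∨ A.card = 4) : ∃ r, E7RootClass r A := by
  rcases h with h | h
  · obtain ⟨i, j, hij, rfl⟩ := Finset.card_eq_two.1 h
    exact ⟨_, pair hij⟩
  · exact ⟨_, half h⟩

theorem exists_codeword_eq {x : evenWeight (Fin 7)} (hx : x ≠ 0) :
    ∃ r A, E7RootClass r A ∧ codeword A = x := by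
  obtain ⟨A, ⟨m, hm⟩, hAx⟩ := exists_even_codeword_eq x
  have hcompl : codeword Aᶜ = x := by rw [← hAx, codeword_eq_iff]; exact .inr rfl
  have hA : ¬(A = ∅ ∨ A = Finset.univ) := by
    rw [← codeword_eq_zero_iff, hAx]
    exact Subtype.coe_injective.ne hx
  rw [← Finset.card_eq_zero, ← Finset.card_eq_iff_eq_univ, Fintype.card_fin] at hA
  have hle : A.card ≤ 8 := A.card_le_univ
  have hcard : A.card = 2 ∨ A.card = 4 ∨ Aᶜ.card = 2 := by
    rw [Finset.card_compl, Fintype.card_fin]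
    lia
  rcases or_assoc.2 hcard with h | h
  · obtain ⟨r, hr⟩ := exists_of_card_eq h
    exact ⟨r, A, hr, hAx⟩
  · obtain ⟨r, hr⟩ := exists_of_card_eq (.inl h)
    exact ⟨r, Aᶜ, hr, hcompl⟩

end E7RootClass

theorem perp8_ray8_iff {u v : Fin 8 → ℝ} : Perp8 (ray8 u) (ray8 v) ↔ u ⬝ᵥ v = 0 := by
  constructor
  · exact fun h ↦ h u (Submodule.mem_span_singleton_self u) v (Submodule.mem_span_singleton_self v)
  · intro h x hx y hy
    obtain ⟨a, rfl⟩ := Submodule.mem_span_singleton.1 hx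
    obtain ⟨b, rfl⟩ := Submodule.mem_span_singleton.1 hy
    change (a • u) ⬝ᵥ (b • v) = 0
    rw [smul_dotProduct, dotProduct_smul, h, smul_zero, smul_zero]

theorem ray8_eq_ray8_iff {u v : Fin 8 → ℝ} (huv : u ⬝ᵥ u = v ⬝ᵥ v) :
    ray8 u = ray8 v ↔ u = v ∨ u = -v := by
  constructor
  · intro h
    have hu : u ∈ ray8 v := h ▸ Submodule.mem_span_singleton_self u
    obtain ⟨c, rfl⟩ := Submodule.mem_span_singleton.1 hu
    obtain rfl | hv := eq_or_ne v 0
    · exact .inl (smul_zero c)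
    rw [smul_dotProduct, dotProduct_smul, smul_smul, smul_eq_mul,
      mul_eq_right₀ (mt dotProduct_self_eq_zero.1 hv)] at huv
    obtain rfl | rfl := mul_self_eq_one_iff.1 huv
    · exact .inl (one_smul ℝ v)
    · exact .inr (neg_one_smul ℝ v)
  · rintro (rfl | rfl)
    · rfl
    · rw [ray8, ← Set.neg_singleton, Submodule.span_neg, ray8]

theorem exists_bijOn_E7lines : ∃ g : evenWeight (Fin 7) → Submodule ℝ (Fin 8 → ℝ),
    Set.BijOn g {0}ᶜ E7lines ∧ ({0}ᶜ : Set (evenWeight (Fin 7))).Pairwise fun x y ↦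
      (Perp8 (g x) (g y) ↔ evenWeightForm (Fin 7) x y = 0) := by
  choose! root cls hroot hcls using
    fun x : evenWeight (Fin 7) ↦ E7RootClass.exists_codeword_eq (x := x)
  have ray8_eq_iff {x : evenWeight (Fin 7)} (hx : x ≠ 0) {s : Fin 8 → ℝ} {B : Finset (Fin 8)}
      (hs : E7RootClass s B) : ray8 (root x) = ray8 s ↔ x = codeword B := by
    rw [ray8_eq_ray8_iff (by rw [(hroot x hx).dotProduct_self, hs.dotProduct_self]),
      (hroot x hx).eq_or_eq_neg_iff hs, hcls x hx]
  refine ⟨fun x ↦ ray8 (root x), ⟨fun x hx ↦ ?_, fun x hx y hy hxy ↦ ?_, ?_⟩,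
    fun x hx y hy hxy ↦ ?_⟩
  · exact ⟨_, mem_E7roots_iff.2 ⟨_, hroot x hx⟩, rfl⟩
  · exact Subtype.ext (((ray8_eq_iff hx (hroot y hy)).1 hxy).trans (hcls y hy))
  · rintro _ ⟨s, hs, rfl⟩
    obtain ⟨B, hB⟩ := mem_E7roots_iff.1 hs
    let x : evenWeight (Fin 7) := ⟨codeword B, codeword_mem_evenWeight (by decide) hB.even_card⟩
    have hx : x ≠ 0 := fun h ↦ hB.codeword_ne_zero (congrArg Subtype.val h)
    exact ⟨x, hx, (ray8_eq_iff hx hB).2 rfl⟩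
  · have hne : codeword (cls x) ≠ codeword (cls y) := by
      rw [hcls x hx, hcls y hy]
      exact Subtype.coe_injective.ne hxy
    change Perp8 (ray8 (root x)) (ray8 (root y)) ↔ x.1 ⬝ᵥ y.1 = 0
    rw [perp8_ray8_iff, (hroot x hx).dotProduct_eq_zero_iff (hroot y hy) hne, hcls x hx, hcls y hy]

end Roots

/-- among the 63 projective lines of the `E7` root system there are
exactly 135 unordered 7-tuples of mutually orthogonal lines. -/
theorem stmt_5 :
    {S : Set (Submodule ℝ (Fin 8 → ℝ)) |
      S ⊆ E7lines ∧ S.ncard = 7 ∧ S.Pairwise Perp8}.ncard = 135 := by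
  obtain ⟨g, hg, hperp⟩ := exists_bijOn_E7lines
  have hdim : finrank (ZMod 2) (evenWeight (Fin 7)) = 2 * 3 := by
    rw [finrank_evenWeight, Fintype.card_fin]
  have hnondeg : (evenWeightForm (Fin 7)).Nondegenerate :=
    evenWeightForm_nondegenerate (by decide)
  calc
    _ = _ := ncard_pairwise_eq_of_bijOn hg hperp 7
    _ = ∏ i ∈ Finset.range 3, (2 ^ (i + 1) + 1) :=
      ncard_pairwise_orthogonal hnondeg evenWeightForm_isAlt hdim
    _ = 135 := by decide
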